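/- arXiv:1503.05901 — 6 statements merged into one kernel-verified Lean document; each statement's English description precedes it below -/
import Mathlib

section
/- Let A ≥ c2 > c1 > 0 be real numbers and set θ = (c2 − c1)/(A − c1). Let (a_i)_{i≥1} be a sequence of real numbers with a_i ≤ A for every i ≥ 1. Then for every positive integer n satisfying Σ_{i=1}^{n} a_i ≥ c2·n, the number of integers m ∈ {1,…,n} that are c1-Pliss times for (a_i) is at least θ·n. -/
/-- `m ≥ 1` is a `c`-Pliss time for the sequence `a` (indexed from `1`):
`∑_{i=k+1}^{m} a i ≥ c·(m-k)` for every `k = 0, 1, …, m-1`. -/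
def PlissTime (a : ℕ → ℝ) (c : ℝ) (m : ℕ) : Prop :=
  1 ≤ m ∧ ∀ k < m, c * ((m : ℝ) - (k : ℝ)) ≤ ∑ i ∈ Finset.Icc (k + 1) m, a i

/-!
The `c`-Pliss times are the times at which the walk `S k = ∑_{i=1}^{k} (a i - c)` attains its
running maximum. That maximum starts at `0` and rises only at such times, by at most `A - c` each
time, so `S n ≤ (A - c) · #{Pliss times in [1, n]}`, while the assumption on the average gives
`(c2 - c1) · n ≤ S n` for `c = c1`.
-/

theorem le_add_card_isMaxOn_nsmul {M : Type*} [AddMonoid M] [LinearOrder M] [AddRightMono M]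
    {S : ℕ → M} {d : M} [DecidablePred fun m ↦ IsMaxOn S (Set.Iic m) m] {n : ℕ}
    (hstep : ∀ k < n, S (k + 1) ≤ S k + d) {k : ℕ} (hk : k ≤ n) :
    S k ≤ S 0 + ((Finset.Icc 1 n).filter fun m ↦ IsMaxOn S (Set.Iic m) m).card • d := by
  induction n generalizing k with
  | zero => simp [Nat.le_zero.mp hk]
  | succ n ih =>
    have ih {j : ℕ} (hj : j ≤ n) := ih (fun i hi ↦ hstep i (hi.trans n.lt_succ_self)) hj
    rw [← Finset.insert_Icc_right_eq_Icc_add_one (Nat.le_add_left 1 n), Finset.filter_insert]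
    split_ifs with hmax
    · rw [Finset.card_insert_of_notMem (by simp), succ_nsmul, ← add_assoc]
      calc S k ≤ S (n + 1) := hmax hk
        _ ≤ S n + d := hstep n n.lt_succ_self
        _ ≤ _ := add_le_add_left (ih le_rfl) d
    · obtain hk | rfl := Nat.le_succ_iff.mp hk
      · exact ih hk
      · obtain ⟨j, hj, hlt⟩ : ∃ j ≤ n + 1, S (n + 1) < S j := by
          simpa [isMaxOn_iff] using hmax
        have hj : j ≤ n := Nat.le_of_lt_succ (hj.lt_of_ne (by rintro rfl; exact hlt.false))
        exact hlt.le.trans (ih hj)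

/-- The walk with increments `a i - c`, where `a` is indexed from `1` as in `PlissTime`. Its running
maxima encode the `c`-Pliss times of `a`. -/
noncomputable def excessSum (a : ℕ → ℝ) (c : ℝ) (k : ℕ) : ℝ :=
  ∑ i ∈ Finset.Icc 1 k, (a i - c)

section excessSum

variable {a : ℕ → ℝ} {c : ℝ}

theorem excessSum_zero : excessSum a c 0 = 0 := by
  simp [excessSum]

theorem excessSum_succ (k : ℕ) : excessSum a c (k + 1) = excessSum a c k + (a (k + 1) - c) :=
  Finset.sum_Icc_succ_top (Nat.le_add_left 1 k) _

theorem excessSum_eq_sum_sub (k : ℕ) :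
    excessSum a c k = ∑ i ∈ Finset.Icc 1 k, a i - c * k := by
  simp [excessSum, Finset.sum_sub_distrib, mul_comm]

theorem excessSum_sub_excessSum {k m : ℕ} (hkm : k ≤ m) :
    excessSum a c m - excessSum a c k = ∑ i ∈ Finset.Icc (k + 1) m, a i - c * (m - k) := by
  have hsplit := Finset.sum_Ioc_consecutive a k.zero_le hkm
  simp only [← Finset.Icc_add_one_left_eq_Ioc, zero_add] at hsplit
  rw [excessSum_eq_sum_sub, excessSum_eq_sum_sub, ← hsplit]
  ring

theorem plissTime_iff_isMaxOn_excessSum {m : ℕ} (hm : 1 ≤ m) :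
    PlissTime a c m ↔ IsMaxOn (excessSum a c) (Set.Iic m) m := by
  have hle {k : ℕ} (hk : k < m) :
      c * (m - k) ≤ ∑ i ∈ Finset.Icc (k + 1) m, a i ↔ excessSum a c k ≤ excessSum a c m := by
    rw [← sub_nonneg, ← excessSum_sub_excessSum hk.le, sub_nonneg]
  simp only [PlissTime, hm, true_and, isMaxOn_iff, Set.mem_Iic]
  constructor
  · intro h k hk
    obtain hlt | rfl := hk.lt_or_eq
    · exact (hle hlt).mp (h k hlt)
    · exact le_rfl
  · exact fun h k hk ↦ (hle hk).mpr (h k hk.le)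

theorem excessSum_le_ncard_plissTime_mul {A : ℝ} {n : ℕ} (ha : ∀ i ∈ Finset.Icc 1 n, a i ≤ A) :
    excessSum a c n ≤
      ({m | m ∈ Finset.Icc 1 n ∧ PlissTime a c m} : Set ℕ).ncard * (A - c) := by
  classical
  have hstep (k : ℕ) (hk : k < n) : excessSum a c (k + 1) ≤ excessSum a c k + (A - c) := by
    have := ha (k + 1) (Finset.mem_Icc.mpr ⟨Nat.le_add_left 1 k, hk⟩)
    rw [excessSum_succ]
    gcongr
  rw [← Finset.coe_filter, Set.ncard_coe_finset, Finset.filter_congr fun m hm ↦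
    plissTime_iff_isMaxOn_excessSum (Finset.mem_Icc.mp hm).1]
  simpa only [excessSum_zero, zero_add, nsmul_eq_mul] using
    le_add_card_isMaxOn_nsmul hstep le_rfl

end excessSum

theorem pliss_lemma_general {A c₁ c₂ : ℝ} (hc₁ : c₁ < A) {a : ℕ → ℝ} {n : ℕ}
    (ha : ∀ i ∈ Finset.Icc 1 n, a i ≤ A) (hsum : c₂ * n ≤ ∑ i ∈ Finset.Icc 1 n, a i) :
    (c₂ - c₁) / (A - c₁) * n ≤
      ({m | m ∈ Finset.Icc 1 n ∧ PlissTime a c₁ m} : Set ℕ).ncard := by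
  rw [div_mul_eq_mul_div, div_le_iff₀ (sub_pos.mpr hc₁)]
  calc (c₂ - c₁) * n = c₂ * n - c₁ * n := sub_mul ..
    _ ≤ ∑ i ∈ Finset.Icc 1 n, a i - c₁ * n := by gcongr
    _ = excessSum a c₁ n := (excessSum_eq_sum_sub n).symm
    _ ≤ _ := excessSum_le_ncard_plissTime_mul ha

/-- **Pliss lemma.** If `A ≥ c2 > c1 > 0`, `θ = (c2 - c1)/(A - c1)`, `a i ≤ A` for all `i ≥ 1`,
and `∑_{i=1}^{n} a i ≥ c2·n`, then there are at least `θ·n` many `c1`-Pliss times for `a`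
in `{1, …, n}`. -/
theorem pliss_lemma (A c1 c2 : ℝ) (hA : c2 ≤ A) (h21 : c1 < c2) (h1 : 0 < c1)
    (a : ℕ → ℝ) (ha : ∀ i, 1 ≤ i → a i ≤ A)
    (n : ℕ) (hn : 1 ≤ n) (hsum : c2 * (n : ℝ) ≤ ∑ i ∈ Finset.Icc 1 n, a i) :
    ((c2 - c1) / (A - c1)) * (n : ℝ) ≤
      (({m | m ∈ Finset.Icc 1 n ∧ PlissTime a c1 m} : Set ℕ).ncard : ℝ) :=
  pliss_lemma_general (h21.trans_le hA) (fun i hi ↦ ha i (Finset.mem_Icc.mp hi).1) hsum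
end

section
/- Let A ≥ c2 > c1 > 0 be real numbers, set θ = (c2 − c1)/(A − c1), and let (a_i)_{i≥1} be a sequence of real numbers with a_i ≤ A for every i ≥ 1. Let c0 < c1, let I be a subset of the positive integers, and let (b_i)_{i≥1} be a sequence of real numbers with b_i = a_i for i ∈ I and b_i ≤ min{a_i, c0} for i ∉ I. Then: (a) every c1-Pliss time for (b_i) is a c1-Pliss time for (a_i); (b) every c1-Pliss time for (b_i) belongs to I. Consequently, for every positive integer n with Σ_{i=1}^{n} b_i ≥ c2·n, there are at least θ·n c1-Pliss times for (a_i) belonging to I ∩ {1,…,n}. -/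
/-!
The partial sums of `b i - c` grow by at most `A - c` per step, and the `c`-Pliss times of `b` are
exactly the times at which they attain their running maximum. Since the running maximum can only
increase at such a time, reaching `(c2 - c) * n` takes at least `(c2 - c) / (A - c) * n` of them.
Every Pliss time of `b` is one for the larger sequence `a`, and it lies in `I` because the last
term `b m` must be at least `c`.
-/

open Finset

section Records

variable {M : Type*} [LinearOrder M] {S : ℕ → M} {m n k : ℕ}

/-- The times in `{1, …, n}` at which `S` attains its running maximum, that is, its weak records;
the starting time `0` is not counted. -/
def weakRecords (S : ℕ → M) (n : ℕ) : Finset ℕ :=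
  {m ∈ Icc 1 n | ∀ k < m, S k ≤ S m}

lemma mem_weakRecords : m ∈ weakRecords S n ↔ m ∈ Icc 1 n ∧ ∀ k < m, S k ≤ S m :=
  mem_filter

lemma weakRecords_mono (S : ℕ → M) : Monotone (weakRecords S) :=
  fun _ _ h => filter_subset_filter _ (Icc_subset_Icc_right h)

lemma card_weakRecords_lt_card_weakRecords (hkm : k < m) (hm : ∀ j < m, S j ≤ S m) :
    #(weakRecords S k) < #(weakRecords S m) := by
  refine card_lt_card ((ssubset_iff_of_subset (weakRecords_mono S hkm.le)).2 ⟨m, ?_, ?_⟩)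
  · exact mem_weakRecords.2 ⟨mem_Icc.2 ⟨by omega, le_rfl⟩, hm⟩
  · exact fun h => hkm.not_ge (mem_Icc.1 (mem_weakRecords.1 h).1).2

lemma le_add_card_weakRecords_nsmul [AddCommMonoid M] [IsOrderedAddMonoid M] {d : M} (hd : 0 ≤ d)
    (hS : ∀ n, S (n + 1) ≤ S n + d) (n : ℕ) : S n ≤ S 0 + #(weakRecords S n) • d := by
  induction n using Nat.strong_induction_on with
  | h n ih =>
    by_cases hrec : ∀ k < n, S k ≤ S n
    · cases n with
      | zero => exact le_add_of_nonneg_right (nsmul_nonneg hd _)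
      | succ n =>
        calc S (n + 1) ≤ S n + d := hS n
          _ ≤ S 0 + #(weakRecords S n) • d + d := by gcongr; exact ih n n.lt_succ_self
          _ = S 0 + (#(weakRecords S n) + 1) • d := by rw [succ_nsmul, add_assoc]
          _ ≤ S 0 + #(weakRecords S (n + 1)) • d := by
            gcongr
            exact card_weakRecords_lt_card_weakRecords n.lt_succ_self hrec
    · push Not at hrec
      obtain ⟨k, hkn, hlt⟩ := hrec
      calc S n ≤ S k := hlt.le
        _ ≤ S 0 + #(weakRecords S k) • d := ih k hkn
        _ ≤ S 0 + #(weakRecords S n) • d := by gcongr; exact weakRecords_mono S hkn.le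

end Records

section Excess

variable {a b : ℕ → ℝ} {c A : ℝ} {k m n : ℕ}

/-- The excess of `a 1 + ⋯ + a n` over `c * n`, whose weak records are the `c`-Pliss times
of `a`. -/
def plissExcess (a : ℕ → ℝ) (c : ℝ) (n : ℕ) : ℝ :=
  ∑ i ∈ Icc 1 n, a i - c * n

lemma plissExcess_zero (a : ℕ → ℝ) (c : ℝ) : plissExcess a c 0 = 0 := by
  simp [plissExcess]

lemma plissExcess_succ (a : ℕ → ℝ) (c : ℝ) (n : ℕ) :
    plissExcess a c (n + 1) = plissExcess a c n + (a (n + 1) - c) := by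
  rw [plissExcess, plissExcess, sum_Icc_succ_top (by omega)]
  push_cast
  ring

lemma plissExcess_sub_plissExcess (a : ℕ → ℝ) (c : ℝ) (hkm : k ≤ m) :
    plissExcess a c m - plissExcess a c k = ∑ i ∈ Icc (k + 1) m, a i - c * (m - k) := by
  have hsplit : ∑ i ∈ Icc 1 k, a i + ∑ i ∈ Icc (k + 1) m, a i = ∑ i ∈ Icc 1 m, a i := by
    simpa only [← Icc_add_one_left_eq_Ioc, zero_add] using sum_Ioc_consecutive a k.zero_le hkm
  rw [plissExcess, plissExcess, ← hsplit]
  ring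

lemma plissTime_iff_plissExcess_le :
    PlissTime a c m ↔ 1 ≤ m ∧ ∀ k < m, plissExcess a c k ≤ plissExcess a c m := by
  refine and_congr_right fun _ => forall₂_congr fun k hk => ?_
  rw [← sub_nonneg, ← plissExcess_sub_plissExcess a c hk.le, sub_nonneg]

lemma mem_weakRecords_plissExcess :
    m ∈ weakRecords (plissExcess a c) n ↔ m ∈ Icc 1 n ∧ PlissTime a c m := by
  rw [mem_weakRecords, plissTime_iff_plissExcess_le]
  exact and_congr_right fun hm => (and_iff_right (mem_Icc.1 hm).1).symm

lemma plissExcess_le_mul_card_weakRecords (hcA : c ≤ A) (ha : ∀ i, 1 ≤ i → a i ≤ A) (n : ℕ) :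
    plissExcess a c n ≤ (A - c) * #(weakRecords (plissExcess a c) n) := by
  have hstep (n : ℕ) : plissExcess a c (n + 1) ≤ plissExcess a c n + (A - c) := by
    rw [plissExcess_succ]
    gcongr
    exact ha _ n.succ_pos
  simpa only [plissExcess_zero, zero_add, nsmul_eq_mul, mul_comm] using
    le_add_card_weakRecords_nsmul (sub_nonneg.2 hcA) hstep n

lemma PlissTime.mono (hab : ∀ i, 1 ≤ i → b i ≤ a i) (hm : PlissTime b c m) : PlissTime a c m :=
  ⟨hm.1, fun k hk => (hm.2 k hk).trans <| sum_le_sum fun i hi =>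
    hab i (k.succ_pos.trans_le (mem_Icc.1 hi).1)⟩

lemma PlissTime.le_apply (hm : PlissTime a c m) : c ≤ a m := by
  obtain ⟨k, rfl⟩ := Nat.exists_eq_add_of_le' hm.1
  simpa using hm.2 k k.lt_succ_self

end Excess

theorem localized_pliss_one_general {A c : ℝ} (c2 : ℝ) (hcA : c < A) {a b : ℕ → ℝ} {I : Set ℕ}
    (hba : ∀ i, 1 ≤ i → b i ≤ a i) (hbA : ∀ i, 1 ≤ i → b i ≤ A)
    (hbI : ∀ i, 1 ≤ i → i ∉ I → b i < c) :
    (∀ m, PlissTime b c m → PlissTime a c m) ∧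
    (∀ m, PlissTime b c m → m ∈ I) ∧
    (∀ n : ℕ, c2 * (n : ℝ) ≤ ∑ i ∈ Icc 1 n, b i →
      ((c2 - c) / (A - c)) * (n : ℝ) ≤
        (({m | m ∈ I ∧ m ∈ Icc 1 n ∧ PlissTime a c m} : Set ℕ).ncard : ℝ)) := by
  have hmono (m : ℕ) (hm : PlissTime b c m) : PlissTime a c m := hm.mono hba
  have hmem (m : ℕ) (hm : PlissTime b c m) : m ∈ I :=
    not_imp_comm.1 (hbI m hm.1) hm.le_apply.not_gt
  refine ⟨hmono, hmem, fun n hn => ?_⟩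
  set T : Set ℕ := {m | m ∈ I ∧ m ∈ Icc 1 n ∧ PlissTime a c m}
  have hsub : ↑(weakRecords (plissExcess b c) n) ⊆ T := fun m hm =>
    have ⟨hmn, hpliss⟩ := mem_weakRecords_plissExcess.1 hm
    ⟨hmem m hpliss, hmn, hmono m hpliss⟩
  have hcard : #(weakRecords (plissExcess b c) n) ≤ T.ncard := by
    rw [← Set.ncard_coe_finset]
    exact Set.ncard_le_ncard hsub ((Icc 1 n).finite_toSet.subset fun m hm => hm.2.1)
  rw [div_mul_eq_mul_div, div_le_iff₀' (sub_pos.2 hcA)]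
  calc (c2 - c) * n ≤ plissExcess b c n := by rw [plissExcess]; linarith
    _ ≤ (A - c) * #(weakRecords (plissExcess b c) n) :=
      plissExcess_le_mul_card_weakRecords hcA.le hbA n
    _ ≤ (A - c) * T.ncard := by have := sub_pos.2 hcA; gcongr

/-- **Localized Pliss lemma (1).** Lowering the sequence `a` to `b` outside a prescribed set
`I` (with `b i ≤ min (a i) c0`, `c0 < c1`, there): (a) every `c1`-Pliss time of `b` is a
`c1`-Pliss time of `a`; (b) every `c1`-Pliss time of `b` belongs to `I`. Consequently, if
`∑_{i=1}^{n} b i ≥ c2·n` then there are at least `θ·n` many `c1`-Pliss times for `a` inside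
`I ∩ {1,…,n}`, where `θ = (c2 - c1)/(A - c1)`. -/
theorem localized_pliss_one (A c1 c2 : ℝ) (hA : c2 ≤ A) (h21 : c1 < c2) (h1 : 0 < c1)
    (a : ℕ → ℝ) (ha : ∀ i, 1 ≤ i → a i ≤ A)
    (c0 : ℝ) (hc0 : c0 < c1) (I : Set ℕ) (b : ℕ → ℝ)
    (hbI : ∀ i, 1 ≤ i → i ∈ I → b i = a i)
    (hbnI : ∀ i, 1 ≤ i → i ∉ I → b i ≤ min (a i) c0) :
    (∀ m, PlissTime b c1 m → PlissTime a c1 m) ∧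
    (∀ m, PlissTime b c1 m → m ∈ I) ∧
    (∀ n : ℕ, 1 ≤ n → c2 * (n : ℝ) ≤ ∑ i ∈ Finset.Icc 1 n, b i →
      ((c2 - c1) / (A - c1)) * (n : ℝ) ≤
        (({m | m ∈ I ∧ m ∈ Finset.Icc 1 n ∧ PlissTime a c1 m} : Set ℕ).ncard : ℝ)) := by
  have hba (i : ℕ) (hi : 1 ≤ i) : b i ≤ a i := by
    by_cases hiI : i ∈ I
    · exact (hbI i hi hiI).le
    · exact (hbnI i hi hiI).trans (min_le_left _ _)
  have ⟨hmono, hmem, hcount⟩ := localized_pliss_one_general c2 (h21.trans_le hA) hba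
    (fun i hi => (hba i hi).trans (ha i hi))
    (fun i hi hiI => ((hbnI i hi hiI).trans (min_le_right _ _)).trans_lt hc0)
  exact ⟨hmono, hmem, fun n _ => hcount n⟩
end

section
/- Let A ≥ c2 > c1 > 0 be real numbers, set θ = (c2 − c1)/(A − c1), and let (a_i)_{i≥1} be a sequence of real numbers with a_i ≤ A for every i ≥ 1. Suppose the positive integers are partitioned as I ∪ J with I infinite and a_i ≥ c1 for every i ∈ J, and let (b_j)_{j≥1} be the J-reduced sequence of (a_i), i.e. b_j = a_{i(j)} where i(j) is the j-th smallest element of I. Then for every m ≥ 1 that is a c1-Pliss time for (b_j), the integer i(m) ∈ I is a c1-Pliss time for (a_i). Consequently, for every positive integer n with Σ_{j=1}^{n} b_j ≥ c2·n, there are at least θ·n c1-Pliss times for (a_i) in I ∩ {1,…,i(n)}. -/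
/-- For an (infinite) set `I` of positive integers, `reduceIdx I j` is the `j`-th smallest
element of `I` (for `j ≥ 1`). -/
noncomputable def reduceIdx (I : Set ℕ) (j : ℕ) : ℕ := Nat.nth (· ∈ I) (j - 1)

/-!
Write `S k` for the partial sums of `a i - c`; then `m` is a `c`-Pliss time exactly when
`S k ≤ S m` for all `k < m`. If `S n` is not such a record, some earlier `S k` exceeds it; if it is,
then `S n ≤ S (n - 1) + (A - c)`. By induction, `S n` is at most `A - c` times the number of Pliss
times up to `n`.

To pass from the reduced sequence to `a`, note that a block `(k, i(m)]` consists of the terms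
`i(j)` with `#(I ∩ [0, k]) < j ≤ m`, whose total excess over `c` is nonnegative when `m` is a Pliss
time of the reduced sequence, and of terms outside `I`, which are each at least `c`.
-/

section

open Finset

theorem sum_Ioc_sub_const {R : Type*} [Ring R] (a : ℕ → R) (c : R) {k m : ℕ} (hkm : k ≤ m) :
    ∑ i ∈ Ioc k m, (a i - c) = ∑ i ∈ Icc (k + 1) m, a i - c * (m - k) := by
  rw [Icc_add_one_left_eq_Ioc, sum_sub_distrib, sum_const, Nat.card_Ioc, nsmul_eq_mul',
    Nat.cast_sub hkm]

theorem plissTime_iff_sum_sub_nonneg {a : ℕ → ℝ} {c : ℝ} {m : ℕ} :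
    PlissTime a c m ↔ 1 ≤ m ∧ ∀ k < m, 0 ≤ ∑ i ∈ Ioc k m, (a i - c) := by
  refine and_congr_right fun _ => forall₂_congr fun k hk => ?_
  rw [sum_Ioc_sub_const a c hk.le, sub_nonneg]

open Classical in
theorem sum_sub_le_mul_card_plissTime {b : ℕ → ℝ} {c A : ℝ} (hcA : c ≤ A)
    (hb : ∀ j, 1 ≤ j → b j ≤ A) (n : ℕ) :
    ∑ j ∈ Ioc 0 n, (b j - c) ≤ (A - c) * #{j ∈ Ioc 0 n | PlissTime b c j} := by
  induction n using Nat.strong_induction_on with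
  | _ n ih =>
    rcases n with _ | n
    · simp
    by_cases hn : PlissTime b c (n + 1)
    · have hcard : #{j ∈ Ioc 0 (n + 1) | PlissTime b c j} =
          #{j ∈ Ioc 0 n | PlissTime b c j} + 1 := by
        rw [← insert_Ioc_right_eq_Ioc_add_one n.zero_le, filter_insert, if_pos hn,
          card_insert_of_notMem (by simp)]
      rw [sum_Ioc_succ_top n.zero_le, hcard, Nat.cast_succ, mul_add_one]
      exact add_le_add (ih n n.lt_succ_self) (sub_le_sub_right (hb _ n.succ_pos) c)
    · obtain ⟨k, hk, hneg⟩ : ∃ k < n + 1, ∑ j ∈ Ioc k (n + 1), (b j - c) < 0 := by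
        simpa [plissTime_iff_sum_sub_nonneg] using hn
      calc ∑ j ∈ Ioc 0 (n + 1), (b j - c)
          = ∑ j ∈ Ioc 0 k, (b j - c) + ∑ j ∈ Ioc k (n + 1), (b j - c) :=
            (sum_Ioc_consecutive _ k.zero_le hk.le).symm
        _ ≤ ∑ j ∈ Ioc 0 k, (b j - c) := add_le_of_nonpos_right hneg.le
        _ ≤ (A - c) * #{j ∈ Ioc 0 k | PlissTime b c j} := ih k hk
        _ ≤ (A - c) * #{j ∈ Ioc 0 (n + 1) | PlissTime b c j} := by
          have : 0 ≤ A - c := sub_nonneg.2 hcA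
          gcongr

variable {I : Set ℕ}

theorem reduceIdx_mem (hI : I.Infinite) (j : ℕ) : reduceIdx I j ∈ I :=
  Nat.nth_mem_of_infinite hI (j - 1)

theorem reduceIdx_monotone (hI : I.Infinite) : Monotone (reduceIdx I) :=
  fun _ _ hij => Nat.nth_monotone hI (Nat.sub_le_sub_right hij 1)

theorem reduceIdx_injOn (hI : I.Infinite) : Set.InjOn (reduceIdx I) (Set.Ici 1) :=
  fun _ hi _ hj hij => Nat.sub_one_cancel hi hj (Nat.nth_injective hI hij)

theorem reduceIdx_count_add_one [DecidablePred (· ∈ I)] {i : ℕ} (hi : i ∈ I) :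
    reduceIdx I (Nat.count (· ∈ I) i + 1) = i :=
  Nat.nth_count (p := (· ∈ I)) hi

theorem lt_reduceIdx_iff [DecidablePred (· ∈ I)] (hI : I.Infinite) {j k : ℕ} (hj : 1 ≤ j) :
    k < reduceIdx I j ↔ Nat.count (· ∈ I) (k + 1) < j :=
  (Nat.count_le_iff_le_nth (p := (· ∈ I)) hI).symm.trans (Nat.le_sub_one_iff_lt hj)

theorem image_reduceIdx_Ioc [DecidablePred (· ∈ I)] (hI : I.Infinite) {m : ℕ} (hm : 1 ≤ m)
    (k : ℕ) :
    (Ioc (Nat.count (· ∈ I) (k + 1)) m).image (reduceIdx I) =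
      {i ∈ Ioc k (reduceIdx I m) | i ∈ I} := by
  ext i
  simp only [mem_image, mem_filter, mem_Ioc]
  constructor
  · rintro ⟨j, ⟨hkj, hjm⟩, rfl⟩
    exact ⟨⟨(lt_reduceIdx_iff hI (Nat.one_le_of_lt hkj)).2 hkj, reduceIdx_monotone hI hjm⟩,
      reduceIdx_mem hI j⟩
  · rintro ⟨⟨hki, him⟩, hi⟩
    refine ⟨_, ⟨Nat.lt_succ_of_le (Nat.count_monotone _ hki), ?_⟩, reduceIdx_count_add_one hi⟩
    have hcount : Nat.count (· ∈ I) i ≤ m - 1 :=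
      (Nat.count_le_iff_le_nth (p := (· ∈ I)) hI).2 him
    exact (Nat.le_sub_one_iff_lt hm).1 hcount

variable {a : ℕ → ℝ} {c : ℝ}

theorem PlissTime.of_reduceIdx (hIpos : ∀ i ∈ I, 1 ≤ i) (hI : I.Infinite)
    (hJ : ∀ i, 1 ≤ i → i ∉ I → c ≤ a i) {m : ℕ}
    (hm : PlissTime (fun j => a (reduceIdx I j)) c m) : PlissTime a c (reduceIdx I m) := by
  classical
  rw [plissTime_iff_sum_sub_nonneg] at hm ⊢
  obtain ⟨hm₁, hsum⟩ := hm
  refine ⟨hIpos _ (reduceIdx_mem hI m), fun k hk => ?_⟩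
  have hinj : Set.InjOn (reduceIdx I) (Ioc (Nat.count (· ∈ I) (k + 1)) m) :=
    (reduceIdx_injOn hI).mono fun j hj => Nat.one_le_of_lt (mem_Ioc.1 hj).1
  calc 0 ≤ ∑ j ∈ Ioc (Nat.count (· ∈ I) (k + 1)) m, (a (reduceIdx I j) - c) :=
        hsum _ ((lt_reduceIdx_iff hI hm₁).1 hk)
    _ = ∑ i ∈ Ioc k (reduceIdx I m) with i ∈ I, (a i - c) := by
        rw [← image_reduceIdx_Ioc hI hm₁, sum_image hinj]
    _ ≤ ∑ i ∈ Ioc k (reduceIdx I m), (a i - c) := by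
        refine sum_le_sum_of_subset_of_nonneg (filter_subset _ _) fun i hi hiI => ?_
        have hi₁ : 1 ≤ i := Nat.one_le_of_lt (mem_Ioc.1 hi).1
        exact sub_nonneg.2 (hJ i hi₁ fun h => hiI (mem_filter.2 ⟨hi, h⟩))

open Classical in
theorem card_plissTime_reduceIdx_le_ncard (hIpos : ∀ i ∈ I, 1 ≤ i) (hI : I.Infinite)
    (hJ : ∀ i, 1 ≤ i → i ∉ I → c ≤ a i) (n : ℕ) :
    #{j ∈ Ioc 0 n | PlissTime (fun j => a (reduceIdx I j)) c j} ≤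
      {i | i ∈ I ∧ i ∈ Icc 1 (reduceIdx I n) ∧ PlissTime a c i}.ncard := by
  rw [← Set.ncard_coe_finset]
  refine Set.ncard_le_ncard_of_injOn (reduceIdx I) (fun j hj => ?_)
    ((reduceIdx_injOn hI).mono fun j hj => (mem_Ioc.1 (mem_filter.1 hj).1).1)
    ((Icc 1 (reduceIdx I n)).finite_toSet.subset fun i hi => hi.2.1)
  obtain ⟨hjn, hjP⟩ := mem_filter.1 hj
  have hmem := reduceIdx_mem hI j
  exact ⟨hmem, mem_Icc.2 ⟨hIpos _ hmem, reduceIdx_monotone hI (mem_Ioc.1 hjn).2⟩,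
    hjP.of_reduceIdx hIpos hI hJ⟩

end

theorem localized_pliss_two_general {A c1 c2 : ℝ} (hc1A : c1 < A) {a : ℕ → ℝ} {I : Set ℕ}
    (ha : ∀ i ∈ I, a i ≤ A) (hIpos : ∀ i ∈ I, 1 ≤ i) (hIinf : I.Infinite)
    (hJ : ∀ i, 1 ≤ i → i ∉ I → c1 ≤ a i) :
    (∀ m, PlissTime (fun j => a (reduceIdx I j)) c1 m →
      reduceIdx I m ∈ I ∧ PlissTime a c1 (reduceIdx I m)) ∧
    ∀ n : ℕ, c2 * n ≤ ∑ j ∈ Finset.Icc 1 n, a (reduceIdx I j) →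
      (c2 - c1) / (A - c1) * n ≤
        {i | i ∈ I ∧ i ∈ Finset.Icc 1 (reduceIdx I n) ∧ PlissTime a c1 i}.ncard := by
  classical
  refine ⟨fun m hm => ⟨reduceIdx_mem hIinf m, hm.of_reduceIdx hIpos hIinf hJ⟩, fun n hn => ?_⟩
  have hpos : 0 < A - c1 := sub_pos.2 hc1A
  rw [div_mul_eq_mul_div, div_le_iff₀' hpos]
  calc (c2 - c1) * n
      ≤ ∑ j ∈ Finset.Ioc 0 n, (a (reduceIdx I j) - c1) := by
        rw [sum_Ioc_sub_const _ _ n.zero_le, Nat.cast_zero, sub_zero, zero_add, sub_mul]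
        exact sub_le_sub_right hn _
    _ ≤ (A - c1) * Finset.card {j ∈ Finset.Ioc 0 n |
          PlissTime (fun j => a (reduceIdx I j)) c1 j} :=
        sum_sub_le_mul_card_plissTime hc1A.le (fun j _ => ha _ (reduceIdx_mem hIinf j)) n
    _ ≤ (A - c1) * {i | i ∈ I ∧ i ∈ Finset.Icc 1 (reduceIdx I n) ∧ PlissTime a c1 i}.ncard := by
        gcongr
        exact card_plissTime_reduceIdx_le_ncard hIpos hIinf hJ n

/-- **Localized Pliss lemma (2).** Assume `A ≥ c2 > c1 > 0`, `θ = (c2-c1)/(A-c1)`,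
`a i ≤ A` for `i ≥ 1`, the positive integers are partitioned as `I ∪ J` with `I` infinite and
`a i ≥ c1` on `J`, and let `b j = a (i(j))` be the `J`-reduced sequence, `i(j)` the `j`-th
smallest element of `I`. Then every `c1`-Pliss time `m` of `b` yields the `c1`-Pliss time
`i(m) ∈ I` of `a`; consequently if `∑_{j=1}^{n} b j ≥ c2·n` then there are at least `θ·n`
many `c1`-Pliss times of `a` in `I ∩ {1,…,i(n)}`. -/
theorem localized_pliss_two (A c1 c2 : ℝ) (hA : c2 ≤ A) (h21 : c1 < c2) (h1 : 0 < c1)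
    (a : ℕ → ℝ) (ha : ∀ i, 1 ≤ i → a i ≤ A)
    (I : Set ℕ) (hIpos : ∀ i ∈ I, 1 ≤ i) (hIinf : I.Infinite)
    (hJ : ∀ i, 1 ≤ i → i ∉ I → c1 ≤ a i) :
    (∀ m, 1 ≤ m → PlissTime (fun j => a (reduceIdx I j)) c1 m →
      reduceIdx I m ∈ I ∧ PlissTime a c1 (reduceIdx I m)) ∧
    (∀ n : ℕ, 1 ≤ n →
      c2 * (n : ℝ) ≤ ∑ j ∈ Finset.Icc 1 n, a (reduceIdx I j) →
      ((c2 - c1) / (A - c1)) * (n : ℝ) ≤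
        (({i | i ∈ I ∧ i ∈ Finset.Icc 1 (reduceIdx I n) ∧ PlissTime a c1 i} : Set ℕ).ncard : ℝ)) :=
  have h := localized_pliss_two_general (h21.trans_le hA) (fun i hi => ha i (hIpos i hi))
    hIpos hIinf hJ
  ⟨fun m _ => h.1 m, fun n _ => h.2 n⟩
end

section
/- Let (a_i)_{i≥1} be a π-periodic sequence of real numbers and let c1 > 0. If m ≥ π is a c1-Pliss time for (a_i), then m + nπ is a c1-Pliss time for (a_i) for every integer n ≥ 0. -/
/-!
The last `n` terms before a Pliss time `q + n` exhibit `n` as a Pliss time of the sequence shifted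
by `q`, and conversely Pliss times can be concatenated. So if `m = q + π` is a Pliss time, then `π`
is a Pliss time of the sequence shifted by `q`; by periodicity it is also one of the sequence
shifted by `m`, and concatenation makes `m + π` a Pliss time.
-/

open Finset

theorem sum_Icc_add_left {α M : Type*} [AddCommMonoid α] [PartialOrder α]
    [IsOrderedCancelAddMonoid α] [ExistsAddOfLE α] [LocallyFiniteOrder α] [AddCommMonoid M]
    (f : α → M) (k n q : α) :
    ∑ i ∈ Icc k n, f (q + i) = ∑ i ∈ Icc (q + k) (q + n), f i := by
  rw [← map_add_left_Icc, sum_map]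
  simp only [addLeftEmbedding_apply]

namespace PlissTime

variable {a b : ℕ → ℝ} {c : ℝ} {m n q : ℕ}

theorem mono_s4 (hab : ∀ i, 1 ≤ i → a i ≤ b i) (ha : PlissTime a c m) : PlissTime b c m :=
  ⟨ha.1, fun k hk => (ha.2 k hk).trans <| sum_le_sum fun i hi =>
    hab i ((Nat.le_add_left 1 k).trans (mem_Icc.mp hi).1)⟩

theorem shift_iff :
    PlissTime (fun i => a (q + i)) c n ↔ 1 ≤ n ∧ ∀ k, q ≤ k → k < q + n →
      c * (((q + n : ℕ) : ℝ) - k) ≤ ∑ i ∈ Icc (k + 1) (q + n), a i := by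
  refine and_congr_right fun _ => ⟨fun h k hqk hk => ?_, fun h k hk => ?_⟩
  · obtain ⟨j, rfl⟩ := Nat.exists_eq_add_of_le hqk
    have hsum := h j (Nat.lt_of_add_lt_add_left hk)
    rw [sum_Icc_add_left] at hsum
    simpa only [Nat.cast_add, add_sub_add_left_eq_sub, add_assoc] using hsum
  · have hsum := h (q + k) (Nat.le_add_right q k) (Nat.add_lt_add_left hk q)
    rw [sum_Icc_add_left]
    simpa only [Nat.cast_add, add_sub_add_left_eq_sub, add_assoc] using hsum

theorem shift (hn : 1 ≤ n) (h : PlissTime a c (q + n)) : PlissTime (fun i => a (q + i)) c n :=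
  shift_iff.mpr ⟨hn, fun k _ hk => h.2 k hk⟩

theorem add (hm : PlissTime a c m) (hn : PlissTime (fun i => a (m + i)) c n) :
    PlissTime a c (m + n) := by
  obtain ⟨hn_pos, htail⟩ := shift_iff.mp hn
  refine ⟨Nat.le_add_right_of_le hm.1, fun k hk => ?_⟩
  rcases lt_or_ge k m with hkm | hmk
  · calc c * (((m + n : ℕ) : ℝ) - k)
        = c * ((m : ℝ) - k) + c * (((m + n : ℕ) : ℝ) - m) := by ring
      _ ≤ ∑ i ∈ Icc (k + 1) m, a i + ∑ i ∈ Icc (m + 1) (m + n), a i :=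
        add_le_add (hm.2 k hkm) (htail m le_rfl (Nat.lt_add_of_pos_right hn_pos))
      _ = ∑ i ∈ Icc (k + 1) (m + n), a i := by
        simp only [Icc_add_one_left_eq_Ioc]
        exact sum_Ioc_consecutive a hkm.le (Nat.le_add_right m n)
  · exact htail k hmk hk

theorem add_period {π : ℕ} (hπ : 1 ≤ π) (hm : π ≤ m) (ha : ∀ i, m < i + π → a i ≤ a (i + π))
    (h : PlissTime a c m) : PlissTime a c (m + π) := by
  obtain ⟨q, rfl⟩ := Nat.exists_eq_add_of_le' hm
  refine h.add ((h.shift hπ).mono_s4 fun i hi => ?_)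
  rw [Nat.add_right_comm q π i]
  exact ha (q + i) (by omega)

end PlissTime

theorem pliss_time_periodic_general {π : ℕ} (hπ : 1 ≤ π) {a : ℕ → ℝ} {c : ℝ} {m : ℕ}
    (hm : π ≤ m) (ha : ∀ i, m < i + π → a i ≤ a (i + π)) (hPliss : PlissTime a c m) (n : ℕ) :
    PlissTime a c (m + n * π) := by
  induction n with
  | zero => simpa only [Nat.zero_mul, Nat.add_zero] using hPliss
  | succ n ih =>
    rw [Nat.succ_mul, ← Nat.add_assoc]
    exact ih.add_period hπ (Nat.le_add_right_of_le hm) fun i hi =>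
      ha i ((Nat.le_add_right m (n * π)).trans_lt hi)

/-- For a `π`-periodic sequence `a` and `c1 > 0`: if `m ≥ π` is a `c1`-Pliss time for `a`,
then `m + n·π` is a `c1`-Pliss time for `a` for every integer `n ≥ 0`. -/
theorem pliss_time_periodic (π : ℕ) (hπ : 1 ≤ π) (a : ℕ → ℝ)
    (hper : ∀ i, 1 ≤ i → a (i + π) = a i) (c1 : ℝ) (hc1 : 0 < c1)
    (m : ℕ) (hm : π ≤ m) (hPliss : PlissTime a c1 m) :
    ∀ n : ℕ, PlissTime a c1 (m + n * π) :=
  pliss_time_periodic_general hπ hm (fun i hi => (hper i (by omega)).ge) hPliss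
end

section
/- Let X be a compact metric space, f : X → X a homeomorphism, and (ψ_n)_{n≥1} a sequence of continuous functions that is subadditive with respect to f with (ψ_n/n)_{n≥1} uniformly bounded from below. Let μ1 and μ2 be two f-invariant ergodic Borel probability measures on X. Then for every γ > 0 there exist a positive integer n0 and a positive number κ such that for every s ∈ [0,1] and every f-invariant Borel probability measure ν on X with D(ν, s·μ1 + (1−s)·μ2) < κ, one has s·ψ(μ1) + (1−s)·ψ(μ2) − γ/2 < ∫(1/n0)ψ_{n0} dν < s·ψ(μ1) + (1−s)·ψ(μ2) + γ/2. -/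
open MeasureTheory Filter

/-- `ψ(μ) = inf_{n ≥ 1} (1/n) ∫ ψ n dμ`. -/
noncomputable def psiInf {X : Type*} [MeasurableSpace X] (ψ : ℕ → X → ℝ)
    (μ : MeasureTheory.Measure X) : ℝ :=
  sInf ((fun n : ℕ => (n : ℝ)⁻¹ * ∫ x, ψ n x ∂μ) '' (Set.Ici 1))

/-! If `f` preserves `μ`, the integrals `∫ ψ n ∂μ` form a subadditive sequence, so by Fekete's lemma
their averages converge to `psiInf ψ μ`. Fix `n` for which the averages with respect to `μ1` and
`μ2` are both close to their limits; closeness is then inherited by all convex combinations. Since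
the probability measures on `X` form a compact space, integration of the continuous function `ψ n`
is uniformly continuous for the Lévy–Prokhorov metric, which gives a `κ` independent of `s`. -/

open scoped Topology

lemma tendsto_inv_mul_sInf_of_subadditive {u : ℕ → ℝ}
    (hu : ∀ m n, 1 ≤ m → 1 ≤ n → u (m + n) ≤ u m + u n)
    (hbdd : BddBelow ((fun n : ℕ => (n : ℝ)⁻¹ * u n) '' Set.Ici 1)) :
    Tendsto (fun n : ℕ => (n : ℝ)⁻¹ * u n) atTop
      (𝓝 (sInf ((fun n : ℕ => (n : ℝ)⁻¹ * u n) '' Set.Ici 1))) := by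
  -- `Subadditive` also constrains the value at `0`, which is therefore reset to `0`.
  let v : ℕ → ℝ := Function.update u 0 0
  have v_zero : v 0 = 0 := Function.update_self ..
  have v_eq {n : ℕ} (hn : 1 ≤ n) : v n = u n :=
    Function.update_of_ne (Nat.one_le_iff_ne_zero.1 hn) ..
  have hsub : Subadditive v := by
    intro m n
    rcases m.eq_zero_or_pos with rfl | hm
    · simp only [zero_add, v_zero, le_refl]
    rcases n.eq_zero_or_pos with rfl | hn
    · simp only [add_zero, v_zero, le_refl]
    simpa only [v_eq hm, v_eq hn, v_eq (Nat.le_add_right_of_le hm)] using hu m n hm hn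
  have v_div : (fun n : ℕ => v n / n) = fun n : ℕ => (n : ℝ)⁻¹ * u n := by
    funext n
    rcases n.eq_zero_or_pos with rfl | hn
    · simp only [Nat.cast_zero, div_zero, inv_zero, zero_mul]
    · rw [v_eq hn, div_eq_inv_mul]
  have hrange : BddBelow (Set.range fun n : ℕ => v n / n) := by
    refine (hbdd.insert 0).mono (Set.range_subset_iff.2 fun n => ?_)
    rcases n.eq_zero_or_pos with rfl | hn
    · exact .inl (by simp only [Nat.cast_zero, div_zero])
    · exact .inr ⟨n, hn, (congrFun v_div n).symm⟩
  simpa only [Subadditive.lim, v_div] using hsub.tendsto_lim hrange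

section Measurable

variable {X Y E : Type*} [MeasurableSpace X] [MeasurableSpace Y]
  [NormedAddCommGroup E] [NormedSpace ℝ E]

lemma integral_le_add_of_ae_le_add_comp {μ : Measure X} {ν : Measure Y} {f : X → Y}
    (hf : MeasurePreserving f μ ν) {φ g : X → ℝ} {h : Y → ℝ} (hφ : Integrable φ μ)
    (hg : Integrable g μ) (hh : Integrable h ν) (hle : ∀ᵐ x ∂μ, φ x ≤ g x + h (f x)) :
    ∫ x, φ x ∂μ ≤ ∫ x, g x ∂μ + ∫ y, h y ∂ν := by
  have hhf : Integrable (fun x => h (f x)) μ := hf.integrable_comp_of_integrable hh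
  calc ∫ x, φ x ∂μ ≤ ∫ x, (g x + h (f x)) ∂μ := integral_mono_ae hφ (hg.add hhf) hle
    _ = ∫ x, g x ∂μ + ∫ x, h (f x) ∂μ := integral_add hg hhf
    _ = ∫ x, g x ∂μ + ∫ y, h y ∂ν := by
      rw [← hf.map_eq] at hh ⊢
      rw [integral_map hf.aemeasurable hh.aestronglyMeasurable]

lemma tendsto_inv_mul_integral_psiInf {f : X → X} {ψ : ℕ → X → ℝ} {μ : Measure X}
    (hf : MeasurePreserving f μ μ) (hint : ∀ n, 1 ≤ n → Integrable (ψ n) μ)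
    (hsub : ∀ n m, 1 ≤ n → 1 ≤ m → ∀ᵐ x ∂μ, ψ (n + m) x ≤ ψ n x + ψ m (f^[n] x))
    (hbdd : BddBelow ((fun n : ℕ => (n : ℝ)⁻¹ * ∫ x, ψ n x ∂μ) '' Set.Ici 1)) :
    Tendsto (fun n : ℕ => (n : ℝ)⁻¹ * ∫ x, ψ n x ∂μ) atTop (𝓝 (psiInf ψ μ)) :=
  tendsto_inv_mul_sInf_of_subadditive
    (fun n m hn hm => integral_le_add_of_ae_le_add_comp (hf.iterate n)
      (hint (n + m) (Nat.le_add_right_of_le hn)) (hint n hn) (hint m hm) (hsub n m hn hm))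
    hbdd

lemma bddBelow_inv_mul_integral {ψ : ℕ → X → ℝ} {μ : Measure X} [IsProbabilityMeasure μ]
    (hint : ∀ n, 1 ≤ n → Integrable (ψ n) μ) {C : ℝ}
    (hC : ∀ n, 1 ≤ n → ∀ᵐ x ∂μ, C ≤ ψ n x / n) :
    BddBelow ((fun n : ℕ => (n : ℝ)⁻¹ * ∫ x, ψ n x ∂μ) '' Set.Ici 1) := by
  refine ⟨C, Set.forall_mem_image.2 fun n hn => ?_⟩
  calc C = ∫ _, C ∂μ := by rw [integral_const, probReal_univ, one_smul]
    _ ≤ ∫ x, ψ n x / n ∂μ :=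
      integral_mono_ae (integrable_const C) ((hint n hn).div_const _) (hC n hn)
    _ = (n : ℝ)⁻¹ * ∫ x, ψ n x ∂μ := by rw [integral_div, div_eq_inv_mul]

lemma isProbabilityMeasure_ofReal_smul_add {μ ν : Measure X} [IsProbabilityMeasure μ]
    [IsProbabilityMeasure ν] {s t : ℝ} (hs : 0 ≤ s) (ht : 0 ≤ t) (hst : s + t = 1) :
    IsProbabilityMeasure (ENNReal.ofReal s • μ + ENNReal.ofReal t • ν) where
  measure_univ := by
    simp only [Measure.add_apply, Measure.smul_apply, measure_univ, smul_eq_mul, mul_one,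
      ← ENNReal.ofReal_add hs ht, hst, ENNReal.ofReal_one]

lemma integral_ofReal_smul_add_measure {μ ν : Measure X} {g : X → E} (hμ : Integrable g μ)
    (hν : Integrable g ν) {s t : ℝ} (hs : 0 ≤ s) (ht : 0 ≤ t) :
    ∫ x, g x ∂(ENNReal.ofReal s • μ + ENNReal.ofReal t • ν) =
      s • ∫ x, g x ∂μ + t • ∫ x, g x ∂ν := by
  rw [integral_add_measure (hμ.smul_measure ENNReal.ofReal_ne_top)
      (hν.smul_measure ENNReal.ofReal_ne_top), integral_smul_measure, integral_smul_measure,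
    ENNReal.toReal_ofReal hs, ENNReal.toReal_ofReal ht]

end Measurable

lemma abs_convexCombination_sub_lt {s t a b a' b' ε : ℝ} (hs : 0 ≤ s) (ht : 0 ≤ t)
    (hst : s + t = 1) (ha : |a - a'| < ε) (hb : |b - b'| < ε) :
    |s * a + t * b - (s * a' + t * b')| < ε := by
  rw [← Real.norm_eq_abs, ← mem_ball_zero_iff] at ha hb ⊢
  convert convex_ball (0 : ℝ) ε ha hb hs ht hst using 1
  simp only [smul_eq_mul]
  ring

lemma integrable_of_continuous_of_compactSpace {X E : Type*} [TopologicalSpace X] [CompactSpace X]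
    [MeasurableSpace X] [OpensMeasurableSpace X] [NormedAddCommGroup E] {g : X → E}
    (hg : Continuous g) (μ : Measure X) [IsFiniteMeasureOnCompacts μ] : Integrable g μ :=
  hg.integrable_of_hasCompactSupport (.of_compactSpace g)

section Compact

variable {X : Type*} [MetricSpace X] [CompactSpace X] [MeasurableSpace X] [BorelSpace X]

lemma exists_forall_levyProkhorovDist_lt_abs_integral_sub_lt {g : X → ℝ} (hg : Continuous g)
    {ε : ℝ} (hε : 0 < ε) :
    ∃ κ > 0, ∀ (μ ν : Measure X) [IsProbabilityMeasure μ] [IsProbabilityMeasure ν],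
      levyProkhorovDist μ ν < κ → |∫ x, g x ∂μ - ∫ x, g x ∂ν| < ε := by
  have : CompactSpace (LevyProkhorov (ProbabilityMeasure X)) :=
    LevyProkhorov.probabilityMeasureHomeomorph.compactSpace
  have hcont : Continuous fun μ : LevyProkhorov (ProbabilityMeasure X) =>
      ∫ x, g x ∂(μ.toMeasure : Measure X) :=
    (ProbabilityMeasure.continuous_integral_boundedContinuousFunction
      (BoundedContinuousFunction.mkOfCompact ⟨g, hg⟩)).comp
      LevyProkhorov.continuous_toMeasure_probabilityMeasure
  obtain ⟨κ, hκ, hlt⟩ := Metric.uniformContinuous_iff.1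
    (CompactSpace.uniformContinuous_of_continuous hcont) ε hε
  exact ⟨κ, hκ, fun μ ν hμ hν hd =>
    hlt (a := .ofMeasure ⟨μ, hμ⟩) (b := .ofMeasure ⟨ν, hν⟩) hd⟩

theorem integral_close_on_convex_combination_general
    (f : X → X) (ψ : ℕ → X → ℝ) (hcont : ∀ n, 1 ≤ n → Continuous (ψ n))
    (hsub : ∀ n m, 1 ≤ n → 1 ≤ m → ∀ x, ψ (n + m) x ≤ ψ n x + ψ m (f^[n] x))
    (μ1 μ2 : Measure X) [IsProbabilityMeasure μ1] [IsProbabilityMeasure μ2]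
    (hbdd1 : BddBelow ((fun n : ℕ => (n : ℝ)⁻¹ * ∫ x, ψ n x ∂μ1) '' Set.Ici 1))
    (hbdd2 : BddBelow ((fun n : ℕ => (n : ℝ)⁻¹ * ∫ x, ψ n x ∂μ2) '' Set.Ici 1))
    (h1 : MeasurePreserving f μ1 μ1) (h2 : MeasurePreserving f μ2 μ2)
    (γ : ℝ) (hγ : 0 < γ) :
    ∃ (n0 : ℕ) (κ : ℝ), 1 ≤ n0 ∧ 0 < κ ∧
      ∀ (s : ℝ), 0 ≤ s → s ≤ 1 → ∀ (ν : Measure X), IsProbabilityMeasure ν →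
        levyProkhorovDist ν (ENNReal.ofReal s • μ1 + ENNReal.ofReal (1 - s) • μ2) < κ →
        s * psiInf ψ μ1 + (1 - s) * psiInf ψ μ2 - γ / 2 < (n0 : ℝ)⁻¹ * ∫ x, ψ n0 x ∂ν ∧
          (n0 : ℝ)⁻¹ * ∫ x, ψ n0 x ∂ν < s * psiInf ψ μ1 + (1 - s) * psiInf ψ μ2 + γ / 2 := by
  have hint (μ : Measure X) [IsProbabilityMeasure μ] (n : ℕ) (hn : 1 ≤ n) : Integrable (ψ n) μ :=
    integrable_of_continuous_of_compactSpace (hcont n hn) μ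
  have eventually_near {μ : Measure X} [IsProbabilityMeasure μ] (hμ : MeasurePreserving f μ μ)
      (hbdd : BddBelow ((fun n : ℕ => (n : ℝ)⁻¹ * ∫ x, ψ n x ∂μ) '' Set.Ici 1)) :
      ∀ᶠ n : ℕ in atTop, |(n : ℝ)⁻¹ * ∫ x, ψ n x ∂μ - psiInf ψ μ| < γ / 4 :=
    Metric.tendsto_nhds.1 (tendsto_inv_mul_integral_psiInf hμ (hint μ)
      (fun n m hn hm => .of_forall (hsub n m hn hm)) hbdd) _ (by positivity)
  obtain ⟨n, ⟨near1, near2⟩, hn⟩ :=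
    (((eventually_near h1 hbdd1).and (eventually_near h2 hbdd2)).and (eventually_ge_atTop 1)).exists
  obtain ⟨κ, hκ, hlt⟩ := exists_forall_levyProkhorovDist_lt_abs_integral_sub_lt
    ((hcont n hn).const_mul (n : ℝ)⁻¹) (ε := γ / 4) (by positivity)
  refine ⟨n, κ, hn, hκ, fun s hs hs1 ν hν hd => ?_⟩
  have ht : 0 ≤ 1 - s := sub_nonneg.2 hs1
  have hst : s + (1 - s) = 1 := add_sub_cancel s 1
  have := isProbabilityMeasure_ofReal_smul_add (μ := μ1) (ν := μ2) hs ht hst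
  have hν_combo := hlt ν _ hd
  simp only [integral_ofReal_smul_add_measure ((hint μ1 n hn).const_mul _)
    ((hint μ2 n hn).const_mul _) hs ht, integral_const_mul, smul_eq_mul] at hν_combo
  have hcombo := abs_convexCombination_sub_lt hs ht hst near1 near2
  rw [abs_lt] at hν_combo hcombo
  constructor <;> linarith

end Compact

/-- Let `X` be a compact metric space, `f` a homeomorphism of `X`, `(ψ n)` a subadditive
sequence of continuous functions with `(ψ n / n)` uniformly bounded below, and `μ1, μ2` two
`f`-invariant ergodic Borel probability measures. Then for every `γ > 0` there exist `n0 ≥ 1`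
and `κ > 0` such that for every `s ∈ [0,1]` and every `f`-invariant Borel probability measure
`ν` with `D(ν, s μ1 + (1-s) μ2) < κ` (for the Lévy–Prokhorov metric `D`, which induces the
weak* topology), one has
`s ψ(μ1) + (1-s) ψ(μ2) - γ/2 < ∫ (1/n0) ψ n0 dν < s ψ(μ1) + (1-s) ψ(μ2) + γ/2`. -/
theorem integral_close_on_convex_combination
    {X : Type*} [MetricSpace X] [CompactSpace X] [MeasurableSpace X] [BorelSpace X]
    (f : X ≃ₜ X) (ψ : ℕ → X → ℝ) (hcont : ∀ n, 1 ≤ n → Continuous (ψ n))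
    (hsub : ∀ n m, 1 ≤ n → 1 ≤ m → ∀ x, ψ (n + m) x ≤ ψ n x + ψ m ((⇑f)^[n] x))
    (C : ℝ) (hbd : ∀ n, 1 ≤ n → ∀ x, C ≤ ψ n x / (n : ℝ))
    (μ1 μ2 : Measure X) [IsProbabilityMeasure μ1] [IsProbabilityMeasure μ2]
    (h1 : Ergodic (⇑f) μ1) (h2 : Ergodic (⇑f) μ2)
    (γ : ℝ) (hγ : 0 < γ) :
    ∃ (n0 : ℕ) (κ : ℝ), 1 ≤ n0 ∧ 0 < κ ∧
      ∀ (s : ℝ), 0 ≤ s → s ≤ 1 →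
        ∀ (ν : Measure X), IsProbabilityMeasure ν → MeasurePreserving (⇑f) ν ν →
          levyProkhorovDist ν (ENNReal.ofReal s • μ1 + ENNReal.ofReal (1 - s) • μ2) < κ →
          s * psiInf ψ μ1 + (1 - s) * psiInf ψ μ2 - γ / 2
              < (n0 : ℝ)⁻¹ * ∫ x, ψ n0 x ∂ν ∧
            (n0 : ℝ)⁻¹ * ∫ x, ψ n0 x ∂ν
              < s * psiInf ψ μ1 + (1 - s) * psiInf ψ μ2 + γ / 2 := by
  have hbdd (μ : Measure X) [IsProbabilityMeasure μ] := bddBelow_inv_mul_integral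
    (fun n hn => integrable_of_continuous_of_compactSpace (hcont n hn) μ)
    (fun n hn => .of_forall (hbd n hn))
  obtain ⟨n0, κ, hn0, hκ, hclose⟩ := integral_close_on_convex_combination_general f ψ hcont hsub
    μ1 μ2 (hbdd μ1) (hbdd μ2) h1.toMeasurePreserving h2.toMeasurePreserving γ hγ
  exact ⟨n0, κ, hn0, hκ, fun s hs hs1 ν hν _ => hclose s hs hs1 ν hν⟩
end

section
/- Let X be a compact metric space, f : X → X a homeomorphism, and (ψ_n)_{n≥1} a sequence of continuous functions that is subadditive with respect to f with (ψ_n/n)_{n≥1} uniformly bounded from below. Let τ be a Borel probability measure on the space P(X) of Borel probability measures on X (with the weak* topology) such that τ-almost every θ ∈ P(X) is f-invariant, ergodic, and satisfies ψ(θ) < 0, and let μ ∈ P(X) be the barycenter of τ, i.e. μ(A) = ∫ θ(A) dτ(θ) for every Borel set A ⊆ X. Then μ is f-invariant, and for every γ with 0 < γ < −ψ(μ) there exist a positive integer n0 and κ > 0 such that for every f-invariant ergodic Borel probability measure ν with D(ν, μ) < κ one has ψ(μ) − γ/2 < ∫(1/n0)ψ_{n0} dν < ψ(μ) + γ/2 <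 0. -/
open MeasureTheory Filter

/-!
Only finitely much information about `ψ` is needed near `μ`: as `psiInf ψ μ` is an infimum, one
index `n₀` has `n₀⁻¹ * ∫ ψ n₀ dμ` within `ε` of it, and for this single bounded continuous function
the integral depends continuously on the measure, in the weak topology and hence in the
Lévy–Prokhorov distance. Invariance of `μ` is independent of this: it passes from the components
of a mixture to the mixture, set by set.
-/

section Mixture

variable {P X Y : Type*} [MeasurableSpace P] [MeasurableSpace X] [MeasurableSpace Y]

/-- `μ` is the mixture of the measures `θ p` with `p` distributed according to `τ`. For the
coercion `θ` from `ProbabilityMeasure X` to `Measure X`, this says that `μ` is the barycenter of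
`τ`. The formula is imposed on measurable sets, instead of writing `μ = τ.bind θ`, because `bind`
has a junk value when `θ` is not a.e.-measurable. -/
def IsMixture (τ : Measure P) (θ : P → Measure X) (μ : Measure X) : Prop :=
  ∀ A, MeasurableSet A → μ A = ∫⁻ p, θ p A ∂τ

theorem IsMixture.measurePreserving {τ : Measure P} {θ : P → Measure X} {θ' : P → Measure Y}
    {μ : Measure X} {μ' : Measure Y} {f : X → Y} (hμ : IsMixture τ θ μ)
    (hμ' : IsMixture τ θ' μ') (hf : Measurable f)
    (hθ : ∀ᵐ p ∂τ, MeasurePreserving f (θ p) (θ' p)) : MeasurePreserving f μ μ' := by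
  refine ⟨hf, Measure.ext fun A hA => ?_⟩
  calc μ.map f A = ∫⁻ p, θ p (f ⁻¹' A) ∂τ := by rw [Measure.map_apply hf hA, hμ _ (hf hA)]
    _ = ∫⁻ p, θ' p A ∂τ := lintegral_congr_ae <|
      hθ.mono fun _ hp => hp.measure_preimage hA.nullMeasurableSet
    _ = μ' A := (hμ' A hA).symm

end Mixture

section NormalizedIntegrals

variable {X : Type*} [MeasurableSpace X] {ψ : ℕ → X → ℝ} {μ : Measure X}

theorem bddBelow_image_inv_mul_integral [IsProbabilityMeasure μ] {C : ℝ}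
    (hint : ∀ n, 1 ≤ n → Integrable (ψ n) μ)
    (hC : ∀ n : ℕ, 1 ≤ n → ∀ᵐ x ∂μ, C ≤ ψ n x / (n : ℝ)) :
    BddBelow ((fun n : ℕ => (n : ℝ)⁻¹ * ∫ x, ψ n x ∂μ) '' Set.Ici 1) := by
  refine ⟨C, Set.forall_mem_image.2 fun n hn => ?_⟩
  calc C = ∫ _, C ∂μ := by simp
    _ ≤ ∫ x, ψ n x / (n : ℝ) ∂μ :=
      integral_mono_ae (integrable_const C) ((hint n hn).div_const _) (hC n hn)
    _ = (n : ℝ)⁻¹ * ∫ x, ψ n x ∂μ := by rw [integral_div, inv_mul_eq_div]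

theorem exists_inv_mul_integral_mem_Ico_psiInf
    (hbdd : BddBelow ((fun n : ℕ => (n : ℝ)⁻¹ * ∫ x, ψ n x ∂μ) '' Set.Ici 1))
    {ε : ℝ} (hε : 0 < ε) :
    ∃ n : ℕ, 1 ≤ n ∧ (n : ℝ)⁻¹ * ∫ x, ψ n x ∂μ ∈ Set.Ico (psiInf ψ μ) (psiInf ψ μ + ε) := by
  obtain ⟨_, ⟨n, hn, rfl⟩, hlt⟩ :=
    exists_lt_of_csInf_lt (Set.nonempty_Ici.image _) (lt_add_of_pos_right (psiInf ψ μ) hε)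
  exact ⟨n, hn, csInf_le hbdd ⟨n, hn, rfl⟩, hlt⟩

end NormalizedIntegrals

theorem continuous_integral_probabilityMeasure_of_isBounded_range {X : Type*}
    [TopologicalSpace X] [MeasurableSpace X] [OpensMeasurableSpace X] {g : X → ℝ}
    (hg : Continuous g) (hb : Bornology.IsBounded (Set.range g)) :
    Continuous fun ν : ProbabilityMeasure X => ∫ x, g x ∂(ν : Measure X) :=
  ProbabilityMeasure.continuous_integral_boundedContinuousFunction
    ⟨⟨g, hg⟩, Metric.isBounded_range_iff.1 hb⟩

theorem exists_forall_levyProkhorovDist_lt_of_eventually_nhds {X : Type*} [PseudoMetricSpace X]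
    [MeasurableSpace X] [OpensMeasurableSpace X] {μ : ProbabilityMeasure X}
    {p : ProbabilityMeasure X → Prop} (hp : ∀ᶠ ν in nhds μ, p ν) :
    ∃ κ : ℝ, 0 < κ ∧
      ∀ ν : ProbabilityMeasure X, levyProkhorovDist (ν : Measure X) (μ : Measure X) < κ → p ν := by
  have hp' := (LevyProkhorov.continuous_toMeasure_probabilityMeasure.tendsto
    (LevyProkhorov.ofMeasure μ)).eventually hp
  obtain ⟨κ, hκ, hball⟩ := Metric.eventually_nhds_iff.1 hp'
  exact ⟨κ, hκ, fun ν hν => hball (y := .ofMeasure ν) hν⟩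

theorem exists_forall_levyProkhorovDist_lt_abs_sub_psiInf_lt {X : Type*} [PseudoMetricSpace X]
    [MeasurableSpace X] [OpensMeasurableSpace X] {ψ : ℕ → X → ℝ}
    (hcont : ∀ n, 1 ≤ n → Continuous (ψ n))
    (hrange : ∀ n, 1 ≤ n → Bornology.IsBounded (Set.range (ψ n)))
    {μ : Measure X} [IsProbabilityMeasure μ]
    (hbdd : BddBelow ((fun n : ℕ => (n : ℝ)⁻¹ * ∫ x, ψ n x ∂μ) '' Set.Ici 1))
    {ε : ℝ} (hε : 0 < ε) :
    ∃ (n₀ : ℕ) (κ : ℝ), 1 ≤ n₀ ∧ 0 < κ ∧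
      ∀ ν : Measure X, IsProbabilityMeasure ν → levyProkhorovDist ν μ < κ →
        |(n₀ : ℝ)⁻¹ * ∫ x, ψ n₀ x ∂ν - psiInf ψ μ| < ε := by
  obtain ⟨n₀, hn₀, hge, hlt⟩ := exists_inv_mul_integral_mem_Ico_psiInf hbdd hε
  have hμ : |(n₀ : ℝ)⁻¹ * ∫ x, ψ n₀ x ∂μ - psiInf ψ μ| < ε :=
    abs_sub_lt_iff.2 ⟨by linarith, by linarith⟩
  have hψ :=
    continuous_integral_probabilityMeasure_of_isBounded_range (hcont n₀ hn₀) (hrange n₀ hn₀)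
  have hnear : ∀ᶠ ν : ProbabilityMeasure X in nhds ⟨μ, inferInstance⟩,
      |(n₀ : ℝ)⁻¹ * ∫ x, ψ n₀ x ∂(ν : Measure X) - psiInf ψ μ| < ε :=
    ((hψ.const_mul _).sub continuous_const).abs.continuousAt.eventually_lt_const hμ
  obtain ⟨κ, hκ, hball⟩ := exists_forall_levyProkhorovDist_lt_of_eventually_nhds hnear
  exact ⟨n₀, κ, hn₀, hκ, fun ν hν => hball ⟨ν, hν⟩⟩

theorem ergodic_decomposition_negative_exponent_general
    {P X : Type*} [MeasurableSpace P] [PseudoMetricSpace X] [MeasurableSpace X]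
    [OpensMeasurableSpace X] {f : X → X} (hf : Measurable f) {ψ : ℕ → X → ℝ}
    (hcont : ∀ n, 1 ≤ n → Continuous (ψ n))
    (hrange : ∀ n, 1 ≤ n → Bornology.IsBounded (Set.range (ψ n)))
    {τ : Measure P} {θ : P → Measure X} (hθ : ∀ᵐ p ∂τ, MeasurePreserving f (θ p) (θ p))
    {μ : Measure X} [IsProbabilityMeasure μ] (hμ : IsMixture τ θ μ)
    (hbdd : BddBelow ((fun n : ℕ => (n : ℝ)⁻¹ * ∫ x, ψ n x ∂μ) '' Set.Ici 1)) :
    MeasurePreserving f μ μ ∧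
      ∀ ε : ℝ, 0 < ε →
        ∃ (n₀ : ℕ) (κ : ℝ), 1 ≤ n₀ ∧ 0 < κ ∧
          ∀ ν : Measure X, IsProbabilityMeasure ν → levyProkhorovDist ν μ < κ →
            |(n₀ : ℝ)⁻¹ * ∫ x, ψ n₀ x ∂ν - psiInf ψ μ| < ε :=
  ⟨hμ.measurePreserving hμ hf hθ, fun _ hε =>
    exists_forall_levyProkhorovDist_lt_abs_sub_psiInf_lt hcont hrange hbdd hε⟩

/-- Let `X` be a compact metric space, `f` a homeomorphism of `X`, and `(ψ n)` a subadditive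
sequence of continuous functions with `(ψ n / n)` uniformly bounded below. Let `τ` be a Borel
probability measure on the space `P(X)` of Borel probability measures on `X` (weak* topology)
such that `τ`-a.e. `θ` is `f`-invariant, ergodic and satisfies `ψ(θ) < 0`, and let `μ` be the
barycenter of `τ`. Then `μ` is `f`-invariant, and for every `0 < γ < -ψ(μ)` there are `n0 ≥ 1`
and `κ > 0` such that for every `f`-invariant ergodic Borel probability measure `ν` with
`D(ν, μ) < κ` (Lévy–Prokhorov metric) one has
`ψ(μ) - γ/2 < ∫ (1/n0) ψ n0 dν < ψ(μ) + γ/2 < 0`. -/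
theorem ergodic_decomposition_negative_exponent
    {X : Type*} [MetricSpace X] [CompactSpace X] [MeasurableSpace X] [BorelSpace X]
    [MeasurableSpace (ProbabilityMeasure X)] [BorelSpace (ProbabilityMeasure X)]
    (f : X ≃ₜ X) (ψ : ℕ → X → ℝ) (hcont : ∀ n, 1 ≤ n → Continuous (ψ n))
    (hsub : ∀ n m, 1 ≤ n → 1 ≤ m → ∀ x, ψ (n + m) x ≤ ψ n x + ψ m ((⇑f)^[n] x))
    (C : ℝ) (hbd : ∀ n, 1 ≤ n → ∀ x, C ≤ ψ n x / (n : ℝ))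
    (τ : Measure (ProbabilityMeasure X)) [IsProbabilityMeasure τ]
    (hτ : ∀ᵐ (θ : ProbabilityMeasure X) ∂τ,
      Ergodic (⇑f) (θ : Measure X) ∧ psiInf ψ (θ : Measure X) < 0)
    (μ : Measure X) [IsProbabilityMeasure μ]
    (hbar : ∀ A : Set X, MeasurableSet A → μ A = ∫⁻ θ : ProbabilityMeasure X, (θ : Measure X) A ∂τ) :
    MeasurePreserving (⇑f) μ μ ∧
      ∀ γ : ℝ, 0 < γ → γ < -psiInf ψ μ →
        ∃ (n0 : ℕ) (κ : ℝ), 1 ≤ n0 ∧ 0 < κ ∧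
          ∀ ν : Measure X, IsProbabilityMeasure ν → Ergodic (⇑f) ν →
            levyProkhorovDist ν μ < κ →
            psiInf ψ μ - γ / 2 < (n0 : ℝ)⁻¹ * ∫ x, ψ n0 x ∂ν ∧
            (n0 : ℝ)⁻¹ * ∫ x, ψ n0 x ∂ν < psiInf ψ μ + γ / 2 ∧
            psiInf ψ μ + γ / 2 < 0 := by
  have hint (n : ℕ) (hn : 1 ≤ n) : Integrable (ψ n) μ :=
    (hcont n hn).integrable_of_hasCompactSupport (.of_compactSpace _)
  obtain ⟨hinv, hnear⟩ := ergodic_decomposition_negative_exponent_general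
    f.continuous.measurable hcont (fun n hn => (isCompact_range (hcont n hn)).isBounded)
    (hτ.mono fun _ hθ => hθ.1.toMeasurePreserving) hbar
    (bddBelow_image_inv_mul_integral hint fun n hn => .of_forall (hbd n hn))
  refine ⟨hinv, fun γ hγ hγψ => ?_⟩
  obtain ⟨n₀, κ, hn₀, hκ, hball⟩ := hnear (γ / 2) (half_pos hγ)
  refine ⟨n₀, κ, hn₀, hκ, fun ν hν _ hdist => ?_⟩
  obtain ⟨hlower, hupper⟩ := abs_lt.1 (hball ν hν hdist)
  exact ⟨by linarith, by linarith, by linarith⟩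
end
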